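/- Let p ≥ 1 and, for each vertex t ≠ s, let λ(t) be the maximum number of pairwise edge-disjoint paths from s to t in G and σ(t) = min(p, λ(t)). Then there exists H ⊆ E such that: no edge of H enters s; every vertex t ≠ s has exactly σ(t) edges of H entering it (so |H| = Σ_{t≠s} σ(t)); and for every t ≠ s with σ(t) ≥ 1 there exists a family of σ(t) pairwise edge-disjoint paths from s to t, all of whose edges belong to H, whose total cost is minimum among all families of σ(t) pairwise edge-disjoint paths from s to t in G. Moreover this size is optimal: any H' ⊆ E containing, for every t ≠ s, σ(t) pairwise edge-disjoint paths from s to t must satisfy |H'| ≥ Σ_{t≠s} σ(t). -/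

import Mathlib

open scoped Classical

namespace MultipathPreserver

variable {V : Type*}

/-- `IsPath F u v L`: `L` is a list of pairwise-distinct directed edges
`e_1, …, e_k` with `e_j = (x_{j-1}, x_j)`, `x_0 = u`, `x_k = v`, all edges
belonging to the edge set `F`. The empty list is a path from `u` to `u`. -/
def IsPath (F : Set (V × V)) (u v : V) (L : List (V × V)) : Prop :=
  L.Nodup ∧ (∀ e ∈ L, e ∈ F) ∧ List.Chain' (fun e f => e.2 = f.1) L ∧
  (∀ e ∈ L.head?, e.1 = u) ∧ (∀ e ∈ L.getLast?, e.2 = v) ∧ (L = [] → u = v)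

/-- The cost of a path (sum of edge costs w.r.t. the cost function `w`). -/
def pathCost (w : V × V → ℝ) (L : List (V × V)) : ℝ := (L.map w).sum

/-- A family of `k` pairwise edge-disjoint paths from `u` to `v` in the graph
with edge set `F`. -/
def IsDisjointFamily (F : Set (V × V)) (u v : V) {k : ℕ}
    (P : Fin k → List (V × V)) : Prop :=
  (∀ j, IsPath F u v (P j)) ∧ ∀ j j' : Fin k, j ≠ j' → ∀ e ∈ P j, e ∉ P j'

/-- The total cost of a family of paths. -/
def famCost (w : V × V → ℝ) {k : ℕ} (P : Fin k → List (V × V)) : ℝ :=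
  ∑ j, pathCost w (P j)

/-- A family of `k` pairwise edge-disjoint paths from `u` to `v` whose total
cost is minimum among all such families. -/
def IsMinFamily (F : Set (V × V)) (w : V × V → ℝ) (u v : V) {k : ℕ}
    (P : Fin k → List (V × V)) : Prop :=
  IsDisjointFamily F u v P ∧
  ∀ Q : Fin k → List (V × V), IsDisjointFamily F u v Q → famCost w P ≤ famCost w Q

/-- `S` induces `k` edge-disjoint paths of minimum total cost from `u` to `v`
in the graph with edge set `F` and costs `w`: `S` is exactly the set of edges
used by some minimum-total-cost family of `k` pairwise edge-disjoint paths. -/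
def Induces (F : Set (V × V)) (w : V × V → ℝ) (u v : V) (k : ℕ)
    (S : Set (V × V)) : Prop :=
  ∃ P : Fin k → List (V × V), IsMinFamily F w u v P ∧ S = {e | ∃ j, e ∈ P j}

/-- As `Induces`, but additionally the paths of the family are simple
(their vertices `u, (P j)_1.2, …` are pairwise distinct). -/
def InducesSimple (F : Set (V × V)) (w : V × V → ℝ) (u v : V) (k : ℕ)
    (S : Set (V × V)) : Prop :=
  ∃ P : Fin k → List (V × V), IsMinFamily F w u v P ∧
    (∀ j, (u :: (P j).map Prod.snd).Nodup) ∧ S = {e | ∃ j, e ∈ P j}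

/-- Edge set of the residual network `G_S`: edges of `E \ S` together with the
reversals of the edges of `S`. -/
def resEdges (E S : Set (V × V)) : Set (V × V) :=
  (E \ S) ∪ {e | (e.2, e.1) ∈ S}

/-- Cost function of the residual network `G_S`: a reversed edge `(v,u)` with
`(u,v) ∈ S` costs `-c (u,v)`; any other edge keeps its cost. -/
noncomputable def resCost (c : V × V → ℝ) (S : Set (V × V)) (e : V × V) : ℝ :=
  if (e.2, e.1) ∈ S then -c (e.2, e.1) else c e

/-- `η(L)`: the number of edges of `L` belonging to `E \ H`. -/
noncomputable def eta (E H : Set (V × V)) (L : List (V × V)) : ℕ :=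
  L.countP (fun e => decide (e ∈ E ∧ e ∉ H))

/-- The measure `|π| = (c_S(π), η(π))` of a path, compared lexicographically. -/
noncomputable def pmeasure (w : V × V → ℝ) (E H : Set (V × V))
    (L : List (V × V)) : ℝ × ℕ :=
  (pathCost w L, eta E H L)

/-- Strict lexicographic order on measures. -/
def lexLt (a b : ℝ × ℕ) : Prop := a.1 < b.1 ∨ (a.1 = b.1 ∧ a.2 < b.2)

/-- Lexicographic order on measures. -/
def lexLe (a b : ℝ × ℕ) : Prop := a.1 < b.1 ∨ (a.1 = b.1 ∧ a.2 ≤ b.2)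

/-- `Π(u,v; G_S)`: the paths from `u` to `v` in the residual network `G_S`
that are minimal w.r.t. the lexicographic order `≼` on `|·| = (c_S(·), η(·))`. -/
def PiMin (E H : Set (V × V)) (c : V × V → ℝ) (S : Set (V × V)) (u v : V) :
    Set (List (V × V)) :=
  {L | IsPath (resEdges E S) u v L ∧
    ∀ L', IsPath (resEdges E S) u v L' →
      lexLe (pmeasure (resCost c S) E H L) (pmeasure (resCost c S) E H L')}

/-- The number of edges of the prefix `π[s : q(π)]` of a path `π`:
one more than the index of the last edge of `π`, other than the final edge,
belonging to `E \ H`; `0` if no such edge exists. -/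
noncomputable def qPrefixLen (E H : Set (V × V)) (L : List (V × V)) : ℕ :=
  L.dropLast.length -
    List.findIdx (fun e => decide (e ∈ E ∧ e ∉ H)) L.dropLast.reverse

/-- `q(π)`: the last internal vertex of `π` whose incoming edge along `π`
belongs to `E \ H`, and `s` if no such vertex exists.  The prefix `π[s:q(π)]`
is `L.take (qPrefixLen E H L)` and the suffix `π[q(π):t]` is
`L.drop (qPrefixLen E H L)`. -/
noncomputable def qVert (E H : Set (V × V)) (s : V) (L : List (V × V)) : V :=
  ((L.take (qPrefixLen E H L)).getLast?).elim s Prod.snd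

/-- `λ(t)`: the maximum number of pairwise edge-disjoint paths from `s` to `t`
in the graph with edge set `E`. -/
noncomputable def lambda (E : Set (V × V)) (s t : V) : ℕ :=
  sSup {k : ℕ | ∃ P : Fin k → List (V × V), IsDisjointFamily E s t P}

/-! Order sets of edges by cost, breaking ties by a positive weight that separates all of them, and
let `H` be the union of the flows `F t` of least weight and value `σ t = min p (λ t)` from `s` to
`t ≠ s`. A flow of least weight has no edge entering `s` or leaving its sink, so `F t` has `σ t`
edges entering `t`. It remains to see that an edge `e` of another `F u` entering `t` lies in `F t`.
Otherwise `e` is an edge of the residual multigraph of the difference `F u ∆ F t`, and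

* either it lies on a residual cycle `C`; then `F u ∆ C` and `F t ∆ C` are again flows with the
  same values and the same total weight as `F u` and `F t`, against the uniqueness of the optima;
* or the residual flow through `e` starts at `s`; then `σ t < σ u` and `F t` can be augmented along
  a residual path, so `σ t < λ t`, whence `σ t = p`, against `σ t < σ u ≤ p`.

Conversely any `H'` needs `σ t` edges entering `t`, one per path. -/

section Walks

variable {ι V : Type*} {φ : ι → V × V} {u v : V} {L : List ι}

/-- `L` is a walk from `u` to `v` in the multigraph whose edges are labelled by `ι`, the edge `e`
going from `(φ e).1` to `(φ e).2`. The graph on `V` with edges in `V × V` is the case `φ = id`. -/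
def IsWalk (φ : ι → V × V) : V → V → List ι → Prop
  | u, v, [] => u = v
  | u, v, e :: L => (φ e).1 = u ∧ IsWalk φ (φ e).2 v L

/-- A walk visiting each vertex at most once. -/
structure IsSimplePath (φ : ι → V × V) (u v : V) (L : List ι) : Prop where
  isWalk : IsWalk φ u v L
  nodup_cons_heads : (u :: L.map fun e => (φ e).2).Nodup

/-- `v` can be reached from `u` along the edges in `A`. -/
def Reachable (φ : ι → V × V) (A : Finset ι) : V → V → Prop :=
  Relation.ReflTransGen fun u v => ∃ e ∈ A, φ e = (u, v)

theorem isWalk_id_iff {u v : V} {L : List (V × V)} :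
    IsWalk id u v L ↔ L.IsChain (fun e f => e.2 = f.1) ∧ (∀ e ∈ L.head?, e.1 = u) ∧
      (∀ e ∈ L.getLast?, e.2 = v) ∧ (L = [] → u = v) := by
  induction L generalizing u with
  | nil => simp [IsWalk]
  | cons e L ih =>
    rw [IsWalk, ih]
    cases L with
    | nil => simp
    | cons f L => simp [List.isChain_cons_cons, eq_comm, and_assoc, and_left_comm]

theorem isPath_iff {F : Set (V × V)} {u v : V} {L : List (V × V)} :
    IsPath F u v L ↔ L.Nodup ∧ (∀ e ∈ L, e ∈ F) ∧ IsWalk id u v L :=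
  and_congr_right fun _ => and_congr_right fun _ => isWalk_id_iff.symm

theorem IsWalk.cons_heads_eq_tails_append (h : IsWalk φ u v L) :
    (u :: L.map fun e => (φ e).2) = (L.map fun e => (φ e).1) ++ [v] := by
  induction L generalizing u with
  | nil => simpa [IsWalk] using h
  | cons e L ih => rw [List.map_cons, ih h.2, ← h.1, List.map_cons, List.cons_append]

namespace IsSimplePath

theorem nodup_tails_append (h : IsSimplePath φ u v L) :
    ((L.map fun e => (φ e).1) ++ [v]).Nodup :=
  h.isWalk.cons_heads_eq_tails_append ▸ h.nodup_cons_heads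

theorem nodup (h : IsSimplePath φ u v L) : L.Nodup :=
  (List.nodup_cons.1 h.nodup_cons_heads).2.of_map

theorem head_ne_start (h : IsSimplePath φ u v L) {e : ι} (he : e ∈ L) : (φ e).2 ≠ u := by
  rintro rfl
  exact (List.nodup_cons.1 h.nodup_cons_heads).1 (List.mem_map_of_mem he)

theorem tail_ne_end (h : IsSimplePath φ u v L) {e : ι} (he : e ∈ L) : (φ e).1 ≠ v := by
  rintro rfl
  exact List.disjoint_of_nodup_append h.nodup_tails_append (List.mem_map_of_mem he)
    (List.mem_singleton_self _)

theorem exists_suffix (h : IsSimplePath φ u v L) {x : V}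
    (hx : x ∈ u :: L.map fun e => (φ e).2) : ∃ L', IsSimplePath φ x v L' ∧ L' ⊆ L := by
  induction L generalizing u with
  | nil =>
    obtain rfl : x = u := by simpa using hx
    exact ⟨[], h, List.Subset.refl _⟩
  | cons e L ih =>
    rcases List.mem_cons.1 hx with rfl | hx
    · exact ⟨e :: L, h, List.Subset.refl _⟩
    · obtain ⟨L', hL', hsub⟩ := ih ⟨h.isWalk.2, (List.nodup_cons.1 h.nodup_cons_heads).2⟩ hx
      exact ⟨L', hL', List.subset_cons_of_subset e hsub⟩

end IsSimplePath

theorem Reachable.exists_isSimplePath {A : Finset ι} (h : Reachable φ A u v) :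
    ∃ L, IsSimplePath φ u v L ∧ ∀ e ∈ L, e ∈ A := by
  induction h using Relation.ReflTransGen.head_induction_on with
  | refl => exact ⟨[], ⟨rfl, List.nodup_singleton v⟩, by simp⟩
  | @head a b hab _ ih =>
    obtain ⟨e, he, hab⟩ := hab
    obtain ⟨L, hL, hLA⟩ := ih
    by_cases ha : a ∈ b :: L.map fun e => (φ e).2
    · obtain ⟨L', hL', hsub⟩ := hL.exists_suffix ha
      exact ⟨L', hL', fun f hf => hLA f (hsub hf)⟩
    · refine ⟨e :: L, ⟨?_, ?_⟩, List.forall_mem_cons.2 ⟨he, hLA⟩⟩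
      · exact ⟨congrArg Prod.fst hab, by rw [hab]; exact hL.isWalk⟩
      · rw [List.map_cons, hab]
        exact List.nodup_cons.2 ⟨ha, hL.nodup_cons_heads⟩

end Walks

section Boundary

variable {ι V : Type*} [DecidableEq V] {φ : ι → V × V} {u v x : V} {L : List ι}

/-- The net outflow of a unit of flow along the edge `e`. -/
def dipole (e : V × V) : V → ℤ := Pi.single e.1 1 - Pi.single e.2 1

/-- The net outflow, at each vertex, of a unit of flow along every edge in `A`. -/
def boundary (φ : ι → V × V) (A : Finset ι) : V → ℤ := ∑ e ∈ A, dipole (φ e)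

theorem dipole_swap (e : V × V) : dipole e.swap = -dipole e := (neg_sub _ _).symm

theorem dipole_apply (e : V × V) (v : V) :
    dipole e v = (if e.1 = v then 1 else 0) - (if e.2 = v then 1 else 0) := by
  simp [dipole, Pi.single_apply, eq_comm]

theorem sum_dipole (R : Finset V) (e : V × V) :
    ∑ v ∈ R, dipole e v = (if e.1 ∈ R then 1 else 0) - (if e.2 ∈ R then 1 else 0) := by
  simp [dipole_apply]

theorem sum_boundary (φ : ι → V × V) (A : Finset ι) (R : Finset V) :
    ∑ v ∈ R, boundary φ A v =
      ∑ e ∈ A, ((if (φ e).1 ∈ R then 1 else 0) - (if (φ e).2 ∈ R then 1 else 0)) := by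
  simp only [boundary, Finset.sum_apply]
  rw [Finset.sum_comm]
  simp only [sum_dipole]

theorem boundary_apply (φ : ι → V × V) (A : Finset ι) (v : V) :
    boundary φ A v =
      (A.filter fun e => (φ e).1 = v).card - (A.filter fun e => (φ e).2 = v).card := by
  simp only [boundary, Finset.sum_apply, dipole_apply, Finset.sum_sub_distrib, Finset.sum_boole]

theorem IsWalk.sum_dipole (h : IsWalk φ u v L) :
    (L.map fun e => dipole (φ e)).sum = dipole (u, v) := by
  induction L generalizing u with
  | nil =>
    obtain rfl : u = v := h
    simp [dipole]
  | cons e L ih =>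
    rw [List.map_cons, List.sum_cons, ih h.2, ← h.1]
    simp [dipole]

theorem IsWalk.boundary_toFinset [DecidableEq ι] (h : IsWalk φ u v L) (hL : L.Nodup) :
    boundary φ L.toFinset = dipole (u, v) := by
  rw [boundary, List.sum_toFinset _ hL, h.sum_dipole]

theorem boundary_sdiff [DecidableEq ι] {A B : Finset ι} (h : B ⊆ A) :
    boundary φ (A \ B) = boundary φ A - boundary φ B :=
  eq_sub_of_add_eq (Finset.sum_sdiff h)

theorem exists_reachable_of_boundary_neg {A : Finset ι} (hx : boundary φ A x < 0) :
    ∃ v, 0 < boundary φ A v ∧ Reachable φ A v x := by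
  let R := (insert x (A.image fun e => (φ e).1)).filter fun v => Reachable φ A v x
  have hxR : x ∈ R :=
    Finset.mem_filter.2 ⟨Finset.mem_insert_self _ _, Relation.ReflTransGen.refl⟩
  have hclosed : ∀ e ∈ A, (φ e).2 ∈ R → (φ e).1 ∈ R := fun e he hR =>
    Finset.mem_filter.2 ⟨Finset.mem_insert_of_mem (Finset.mem_image_of_mem _ he),
      (Finset.mem_filter.1 hR).2.head ⟨e, he, rfl⟩⟩
  have hnonneg : 0 ≤ ∑ v ∈ R, boundary φ A v := by
    rw [sum_boundary]
    refine Finset.sum_nonneg fun e he => ?_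
    have := hclosed e he
    split_ifs <;> simp_all
  by_contra! hv
  exact hnonneg.not_gt (Finset.sum_neg' (fun v hvR => not_lt.1 fun hpos =>
    hv v hpos (Finset.mem_filter.1 hvR).2) ⟨x, hxR, hx⟩)

theorem exists_reachable_of_not_reachable {A : Finset ι} {e : ι} (he : e ∈ A)
    (h : ¬ Reachable φ A (φ e).2 (φ e).1) :
    ∃ v, 0 < boundary φ A v ∧ Reachable φ A v (φ e).1 := by
  have hne : (φ e).2 ≠ (φ e).1 := fun heq => h (heq ▸ Relation.ReflTransGen.refl)
  have hb : ∀ v, boundary φ A v = boundary φ (A.erase e) v + dipole (φ e) v := fun v =>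
    (congrFun (Finset.sum_erase_add A (fun e => dipole (φ e)) he) v).symm
  by_cases htail : 0 < boundary φ A (φ e).1
  · exact ⟨_, htail, Relation.ReflTransGen.refl⟩
  obtain ⟨v, hv, hreach⟩ : ∃ v, 0 < boundary φ (A.erase e) v ∧
      Reachable φ (A.erase e) v (φ e).1 := by
    refine exists_reachable_of_boundary_neg ?_
    have := hb (φ e).1
    rw [dipole_apply, if_pos rfl, if_neg hne] at this
    omega
  have hreach' : Reachable φ A v (φ e).1 :=
    Relation.ReflTransGen.mono (fun _ _ ⟨f, hf, hab⟩ => ⟨f, Finset.mem_of_mem_erase hf, hab⟩)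
      _ _ hreach
  refine ⟨v, ?_, hreach'⟩
  have hv2 : (φ e).2 ≠ v := fun heq => h (heq ▸ hreach')
  rw [hb, dipole_apply, if_neg hv2]
  split_ifs <;> omega

theorem Reachable.exists_subset_boundary_eq {A : Finset ι} (h : Reachable φ A u v) :
    ∃ C ⊆ A, boundary φ C = dipole (u, v) := by
  obtain ⟨L, hL, hLA⟩ := h.exists_isSimplePath
  exact ⟨L.toFinset, fun e he => hLA e (List.mem_toFinset.1 he),
    hL.isWalk.boundary_toFinset hL.nodup⟩

theorem Reachable.exists_cycle {A : Finset ι} {e : ι} (he : e ∈ A)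
    (h : Reachable φ A (φ e).2 (φ e).1) : ∃ C ⊆ A, e ∈ C ∧ boundary φ C = 0 := by
  obtain ⟨L, hL, hLA⟩ := h.exists_isSimplePath
  have heL : e ∉ L.toFinset := fun h => hL.tail_ne_end (List.mem_toFinset.1 h) rfl
  refine ⟨insert e L.toFinset, Finset.insert_subset he fun f hf => hLA f (List.mem_toFinset.1 hf),
    Finset.mem_insert_self _ _, ?_⟩
  calc boundary φ (insert e L.toFinset) = dipole (φ e) + boundary φ L.toFinset :=
        Finset.sum_insert heL
    _ = 0 := by
        rw [hL.isWalk.boundary_toFinset hL.nodup, ← Prod.swap, dipole_swap, add_neg_cancel]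

end Boundary

section Flows

variable {ι V : Type*} [DecidableEq V] {φ : ι → V × V} {E : Set ι} {s t : V} {k : ℕ}
  {F : Finset ι}

/-- `F` is the support of an integral flow of value `k` from `s` to `t`, all edges in `E` having
capacity one. -/
structure IsFlow (φ : ι → V × V) (E : Set ι) (s t : V) (k : ℕ) (F : Finset ι) : Prop where
  subset : ↑F ⊆ E
  boundary_eq : boundary φ F = k • dipole (s, t)

/-- `F` is an integral unit-capacity flow of least weight among those of value `k`. -/
structure IsMinFlow {M : Type*} [AddCommMonoid M] [LE M] (φ : ι → V × V) (E : Set ι) (w : ι → M)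
    (s t : V) (k : ℕ) (F : Finset ι) : Prop extends IsFlow φ E s t k F where
  sum_le : ∀ G, IsFlow φ E s t k G → ∑ e ∈ F, w e ≤ ∑ e ∈ G, w e

namespace IsFlow

theorem boundary_apply (h : IsFlow φ E s t k F) (v : V) :
    boundary φ F v = k * ((if s = v then 1 else 0) - (if t = v then 1 else 0)) := by
  rw [h.boundary_eq, Pi.smul_apply, dipole_apply, nsmul_eq_mul]

theorem card_heads (h : IsFlow φ E s t k F) (hts : t ≠ s) :
    (F.filter fun e => (φ e).2 = t).card = (F.filter fun e => (φ e).1 = t).card + k := by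
  have := h.boundary_apply t
  rw [MultipathPreserver.boundary_apply, if_neg hts.symm, if_pos rfl] at this
  omega

theorem exists_isSimplePath (h : IsFlow φ E s t (k + 1) F) :
    ∃ L, IsSimplePath φ s t L ∧ ∀ e ∈ L, e ∈ F := by
  suffices Reachable φ F s t from this.exists_isSimplePath
  by_cases hst : s = t
  · exact hst ▸ Relation.ReflTransGen.refl
  have hneg : boundary φ F t < 0 := by
    rw [h.boundary_apply, if_neg hst, if_pos rfl]
    omega
  obtain ⟨v, hv, hreach⟩ := exists_reachable_of_boundary_neg hneg
  suffices s = v from this ▸ hreach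
  by_contra hsv
  rw [h.boundary_apply, if_neg hsv] at hv
  split_ifs at hv <;> omega

theorem sdiff_toFinset [DecidableEq ι] {L : List ι} (h : IsFlow φ E s t (k + 1) F)
    (hL : IsSimplePath φ s t L) (hLF : ∀ e ∈ L, e ∈ F) : IsFlow φ E s t k (F \ L.toFinset) where
  subset e he := h.subset (Finset.mem_sdiff.1 he).1
  boundary_eq := by
    rw [boundary_sdiff fun e he => hLF e (List.mem_toFinset.1 he), h.boundary_eq,
      hL.isWalk.boundary_toFinset hL.nodup, succ_nsmul, add_sub_cancel_right]

theorem exists_disjoint_isSimplePath (h : IsFlow φ E s t k F) :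
    ∃ P : Fin k → List ι, (∀ j, IsSimplePath φ s t (P j) ∧ ∀ e ∈ P j, e ∈ F) ∧
      Pairwise fun i j => List.Disjoint (P i) (P j) := by
  induction k generalizing F with
  | zero => exact ⟨Fin.elim0, fun j => j.elim0, fun j => j.elim0⟩
  | succ k ih =>
    obtain ⟨L, hL, hLF⟩ := h.exists_isSimplePath
    obtain ⟨P, hP, hdisj⟩ := ih (h.sdiff_toFinset hL hLF)
    have hPF : ∀ j, ∀ e ∈ P j, e ∈ F ∧ e ∉ L := fun j e he => by
      simpa using (hP j).2 e he
    refine ⟨Fin.cons L P, Fin.cases ⟨hL, hLF⟩ fun j => ⟨(hP j).1, fun e he => (hPF j e he).1⟩, ?_⟩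
    exact pairwise_fin_succ_iff.2 ⟨fun j e he => (hPF j e he).2,
      fun j e heL he => (hPF j e he).2 heL, hdisj⟩

end IsFlow

theorem IsFlow.exists_isMinFlow [Finite ι] {M : Type*} [AddCommMonoid M] [LinearOrder M]
    (h : IsFlow φ E s t k F) (w : ι → M) : ∃ G, IsMinFlow φ E w s t k G := by
  obtain ⟨G, hG, hle⟩ := Set.exists_min_image {G | IsFlow φ E s t k G} (fun G => ∑ e ∈ G, w e)
    (Set.toFinite _) ⟨F, h⟩
  exact ⟨G, hG, hle⟩

theorem IsMinFlow.eq_of_subset {M : Type*} [AddCommMonoid M] [PartialOrder M]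
    [IsOrderedCancelAddMonoid M] {w : ι → M} {G : Finset ι} (hF : IsMinFlow φ E w s t k F)
    (hw : ∀ e ∈ E, 0 < w e) (hG : IsFlow φ E s t k G) (hGF : G ⊆ F) : G = F := by
  by_contra hne
  obtain ⟨e, he, heG⟩ := Finset.exists_of_ssubset (hGF.ssubset_of_ne hne)
  exact (hF.sum_le G hG).not_gt (Finset.sum_lt_sum_of_subset hGF he heG (hw e (hF.subset he))
    fun e he _ => (hw e (hF.subset he)).le)

end Flows

section Residual

variable {ι V : Type*} [DecidableEq ι] {φ : ι → V × V} {F G C : Finset ι}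

open scoped symmDiff

/-- The residual multigraph of `F`: same edge labels as `φ`, with the edges in `F` (those that `F`
may give up) keeping their direction and the others (those that it may acquire) reversed. -/
def residual (φ : ι → V × V) (F : Finset ι) (e : ι) : V × V :=
  if e ∈ F then φ e else (φ e).swap

theorem residual_of_mem {e : ι} (he : e ∈ F) : residual φ F e = φ e := if_pos he

theorem residual_swap_of_mem_symmDiff {e : ι} (he : e ∈ F ∆ G) :
    (residual φ F e).swap = residual φ G e := by
  rcases Finset.mem_symmDiff.1 he with ⟨hF, hG⟩ | ⟨hG, hF⟩ <;> simp [residual, hF, hG]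

theorem coe_symmDiff_subset {E : Set ι} (hF : ↑F ⊆ E) (hC : ↑C ⊆ E) : ↑(F ∆ C) ⊆ E := by
  rw [Finset.coe_symmDiff]
  exact symmDiff_le_sup.trans (sup_le hF hC)

theorem symmDiff_union_symmDiff (hC : C ⊆ F ∆ G) : F ∆ C ∪ G ∆ C = F ∪ G := by
  ext e
  have := @hC e
  simp only [Finset.mem_union, Finset.mem_symmDiff] at this ⊢
  tauto

theorem symmDiff_inter_symmDiff (hC : C ⊆ F ∆ G) : F ∆ C ∩ G ∆ C = F ∩ G := by
  ext e
  have := @hC e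
  simp only [Finset.mem_inter, Finset.mem_symmDiff] at this ⊢
  tauto

theorem sum_symmDiff_add_sum_symmDiff {M : Type*} [AddCommMonoid M] (hC : C ⊆ F ∆ G) (w : ι → M) :
    ∑ e ∈ F ∆ C, w e + ∑ e ∈ G ∆ C, w e = ∑ e ∈ F, w e + ∑ e ∈ G, w e := by
  rw [← Finset.sum_union_inter, symmDiff_union_symmDiff hC, symmDiff_inter_symmDiff hC,
    Finset.sum_union_inter]

variable [DecidableEq V]

theorem boundary_symmDiff (φ : ι → V × V) (F C : Finset ι) :
    boundary φ (F ∆ C) = boundary φ F - boundary (residual φ F) C := by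
  have hinter : boundary (residual φ F) (C ∩ F) = boundary φ (F ∩ C) := by
    rw [Finset.inter_comm]
    exact Finset.sum_congr rfl fun e he => by
      rw [residual, if_pos (Finset.mem_of_mem_inter_left he)]
  have hsdiff : boundary (residual φ F) (C \ F) = -boundary φ (C \ F) := by
    rw [boundary, boundary, ← Finset.sum_neg_distrib]
    exact Finset.sum_congr rfl fun e he => by
      rw [residual, if_neg (Finset.mem_sdiff.1 he).2, dipole_swap]
  calc boundary φ (F ∆ C) = boundary φ (F \ C) + boundary φ (C \ F) :=
        Finset.sum_union disjoint_sdiff_sdiff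
    _ = boundary φ (F ∩ C) + boundary φ (F \ C)
          - (boundary (residual φ F) (C ∩ F) + boundary (residual φ F) (C \ F)) := by
        rw [hinter, hsdiff]
        abel
    _ = boundary φ F - boundary (residual φ F) C :=
        congrArg₂ _ (Finset.sum_inter_add_sum_sdiff _ _ _) (Finset.sum_inter_add_sum_sdiff _ _ _)

theorem boundary_symmDiff_right (hC : C ⊆ F ∆ G) :
    boundary φ (G ∆ C) = boundary φ G + boundary (residual φ F) C := by
  rw [boundary_symmDiff, sub_eq_add_neg]
  congr 1
  rw [boundary, boundary, ← Finset.sum_neg_distrib]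
  exact Finset.sum_congr rfl fun e he => by
    rw [← residual_swap_of_mem_symmDiff (hC he), dipole_swap, neg_neg]

theorem boundary_residual_symmDiff (φ : ι → V × V) (F G : Finset ι) :
    boundary (residual φ F) (F ∆ G) = boundary φ F - boundary φ G := by
  have hG := boundary_symmDiff φ F (F ∆ G)
  rw [symmDiff_symmDiff_cancel_left] at hG
  rw [hG, sub_sub_cancel]

end Residual

section Exchange

variable {ι V : Type*} [DecidableEq V] {φ : ι → V × V} {E : Set ι} {s t y : V} {k l : ℕ}
  {F G C : Finset ι}

open scoped symmDiff

section SymmDiff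

variable [DecidableEq ι]

theorem IsFlow.symmDiff_left (hF : IsFlow φ E s t k F) (hG : ↑G ⊆ E) (hC : C ⊆ F ∆ G)
    (hb : boundary (residual φ F) C = 0) : IsFlow φ E s t k (F ∆ C) where
  subset := coe_symmDiff_subset hF.subset
    ((Finset.coe_subset.2 hC).trans (coe_symmDiff_subset hF.subset hG))
  boundary_eq := by rw [boundary_symmDiff, hb, sub_zero, hF.boundary_eq]

theorem IsFlow.symmDiff_right {m : ℕ} (hG : IsFlow φ E s y l G) (hF : ↑F ⊆ E) (hC : C ⊆ F ∆ G)
    (hb : boundary (residual φ F) C = m • dipole (s, y)) : IsFlow φ E s y (l + m) (G ∆ C) where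
  subset := coe_symmDiff_subset hG.subset
    ((Finset.coe_subset.2 hC).trans (coe_symmDiff_subset hF hG.subset))
  boundary_eq := by rw [boundary_symmDiff_right hC, hG.boundary_eq, hb, add_nsmul]

theorem IsFlow.reachable_residual_of_mem_symmDiff (hF : IsFlow φ E s t k F)
    (hG : IsFlow φ E s y l G) {e : ι} (he : e ∈ F ∆ G) (hy : (residual φ F e).2 = y)
    (hcycle : ¬ Reachable (residual φ F) (F ∆ G) y (residual φ F e).1) :
    l < k ∧ Reachable (residual φ F) (F ∆ G) s y := by
  subst hy
  obtain ⟨v, hv, hreach⟩ := exists_reachable_of_not_reachable he hcycle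
  have hvy : (residual φ F e).2 ≠ v := fun h => hcycle (h ▸ hreach)
  rw [boundary_residual_symmDiff, Pi.sub_apply, hF.boundary_apply, hG.boundary_apply,
    if_neg hvy] at hv
  obtain ⟨rfl, hlk⟩ : s = v ∧ l < k := by split_ifs at hv with hsv <;> grind
  exact ⟨hlk, hreach.tail ⟨e, he, rfl⟩⟩

theorem IsMinFlow.eq_empty_of_boundary_eq_zero {M : Type*} [AddCommMonoid M] [LinearOrder M]
    [IsOrderedCancelAddMonoid M] {w : ι → M}
    (hw : Function.Injective fun F : Finset ι => ∑ e ∈ F, w e)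
    (hF : IsMinFlow φ E w s t k F) (hG : IsMinFlow φ E w s y l G) (hC : C ⊆ F ∆ G)
    (hb : boundary (residual φ F) C = 0) : C = ∅ := by
  have hF' : ∑ e ∈ F, w e ≤ ∑ e ∈ F ∆ C, w e :=
    hF.sum_le _ (hF.toIsFlow.symmDiff_left hG.subset hC hb)
  have hG' : ∑ e ∈ G, w e ≤ ∑ e ∈ G ∆ C, w e :=
    hG.sum_le _ (hG.toIsFlow.symmDiff_right (m := 0) hF.subset hC (by rw [hb, zero_nsmul]))
  have hsum := (sum_symmDiff_add_sum_symmDiff hC w).symm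
  have hFC : F = F ∆ C := hw ((add_eq_add_iff_eq_and_eq hF' hG').1 hsum).1
  exact symmDiff_eq_left.1 hFC.symm

end SymmDiff

theorem IsMinFlow.mem_of_head_eq {M : Type*} [AddCommMonoid M] [LinearOrder M]
    [IsOrderedCancelAddMonoid M] {w : ι → M}
    (hw : Function.Injective fun F : Finset ι => ∑ e ∈ F, w e)
    (hF : IsMinFlow φ E w s t k F) (hG : IsMinFlow φ E w s y l G)
    (hkl : (∃ G', IsFlow φ E s y (l + 1) G') → k ≤ l) {e : ι} (he : e ∈ F) (hy : (φ e).2 = y) :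
    e ∈ G := by
  subst hy
  by_contra heG
  have heD : e ∈ F ∆ G := Finset.mem_symmDiff.2 (Or.inl ⟨he, heG⟩)
  have hres : residual φ F e = φ e := residual_of_mem he
  by_cases hcycle : Reachable (residual φ F) (F ∆ G) (φ e).2 (φ e).1
  · obtain ⟨C, hC, heC, hb⟩ := Reachable.exists_cycle heD (hres ▸ hcycle)
    exact Finset.ne_empty_of_mem heC (hF.eq_empty_of_boundary_eq_zero hw hG hC hb)
  · obtain ⟨hlk, hreach⟩ := hF.toIsFlow.reachable_residual_of_mem_symmDiff hG.toIsFlow heD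
      (congrArg Prod.snd hres) (hres ▸ hcycle)
    obtain ⟨C, hC, hb⟩ := hreach.exists_subset_boundary_eq
    have hG' := hG.toIsFlow.symmDiff_right (m := 1) hF.subset hC (by rw [hb, one_nsmul])
    exact hlk.not_ge (hkl ⟨_, hG'⟩)

end Exchange

section Families

variable {V : Type*} {E : Set (V × V)} {s t : V} {k l : ℕ} {P : Fin k → List (V × V)}

theorem IsDisjointFamily.exists_of_le (hP : IsDisjointFamily E s t P) (hl : l ≤ k) :
    ∃ Q : Fin l → List (V × V), IsDisjointFamily E s t Q :=
  ⟨fun j => P (Fin.castLE hl j), fun _ => hP.1 _,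
    fun _ _ hij => hP.2 _ _ fun h => hij (Fin.castLE_injective hl h)⟩

variable [DecidableEq V] {F : Finset (V × V)}

/-- The set of edges used by a family of paths. -/
def familyEdges (P : Fin k → List (V × V)) : Finset (V × V) :=
  Finset.univ.biUnion fun j => (P j).toFinset

theorem mem_familyEdges {e : V × V} : e ∈ familyEdges P ↔ ∃ j, e ∈ P j := by
  simp [familyEdges]

theorem IsDisjointFamily.sum_familyEdges {M : Type*} [AddCommMonoid M]
    (hP : IsDisjointFamily E s t P) (w : V × V → M) :
    ∑ e ∈ familyEdges P, w e = ∑ j, ((P j).map w).sum := by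
  have hdisj : ((Finset.univ : Finset (Fin k)) : Set (Fin k)).PairwiseDisjoint
      fun j => (P j).toFinset := fun i _ j _ hij =>
    Finset.disjoint_left.2 fun e hi hj =>
      hP.2 i j hij e (List.mem_toFinset.1 hi) (List.mem_toFinset.1 hj)
  rw [familyEdges, Finset.sum_biUnion hdisj]
  exact Finset.sum_congr rfl fun j _ => List.sum_toFinset w (hP.1 j).1

theorem IsDisjointFamily.isFlow (hP : IsDisjointFamily E s t P) :
    IsFlow id E s t k (familyEdges P) where
  subset e he := by
    obtain ⟨j, hj⟩ := mem_familyEdges.1 he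
    exact (hP.1 j).2.1 e hj
  boundary_eq := by
    have hwalk : ∀ j, ((P j).map fun e => dipole (id e)).sum = dipole (s, t) := fun j =>
      (isPath_iff.1 (hP.1 j)).2.2.sum_dipole
    simp only [boundary, hP.sum_familyEdges, hwalk, Finset.sum_const, Finset.card_univ,
      Fintype.card_fin]

theorem IsFlow.exists_isDisjointFamily (hF : IsFlow id E s t k F) :
    ∃ P : Fin k → List (V × V), IsDisjointFamily E s t P ∧ familyEdges P ⊆ F ∧
      ∀ j, IsSimplePath id s t (P j) := by
  obtain ⟨P, hP, hdisj⟩ := hF.exists_disjoint_isSimplePath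
  refine ⟨P, ⟨fun j => isPath_iff.2 ⟨(hP j).1.nodup, fun e he => hF.subset ((hP j).2 e he),
    (hP j).1.isWalk⟩, fun i j hij e hi hj => hdisj hij hi hj⟩, fun e he => ?_, fun j => (hP j).1⟩
  obtain ⟨j, hj⟩ := mem_familyEdges.1 he
  exact (hP j).2 e hj

theorem IsMinFlow.head_ne_source_and_tail_ne_sink {M : Type*} [AddCommMonoid M] [PartialOrder M]
    [IsOrderedCancelAddMonoid M] {w : V × V → M} (hw : ∀ e ∈ E, 0 < w e)
    (hF : IsMinFlow id E w s t k F) {e : V × V} (he : e ∈ F) : e.2 ≠ s ∧ e.1 ≠ t := by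
  obtain ⟨P, hP, hPF, hsimple⟩ := hF.toIsFlow.exists_isDisjointFamily
  rw [← hF.eq_of_subset hw hP.isFlow hPF] at he
  obtain ⟨j, hj⟩ := mem_familyEdges.1 he
  exact ⟨(hsimple j).head_ne_start hj, (hsimple j).tail_ne_end hj⟩

theorem IsMinFlow.exists_isMinFamily {c : V × V → ℝ} (hc : ∀ e ∈ E, 0 ≤ c e)
    (hF : IsMinFlow id E c s t k F) :
    ∃ P : Fin k → List (V × V), IsMinFamily E c s t P ∧ familyEdges P ⊆ F := by
  obtain ⟨P, hP, hPF, -⟩ := hF.toIsFlow.exists_isDisjointFamily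
  refine ⟨P, ⟨hP, fun Q hQ => ?_⟩, hPF⟩
  calc famCost c P = ∑ e ∈ familyEdges P, c e := (hP.sum_familyEdges c).symm
    _ ≤ ∑ e ∈ F, c e :=
        Finset.sum_le_sum_of_subset_of_nonneg hPF fun e he _ => hc e (hF.subset he)
    _ ≤ ∑ e ∈ familyEdges Q, c e := hF.sum_le _ hQ.isFlow
    _ = famCost c Q := hQ.sum_familyEdges c

end Families

section Connectivity

variable {V : Type*} [Finite V] {E : Set (V × V)} {s t : V} {k : ℕ}

theorem IsDisjointFamily.le_ncard_heads {P : Fin k → List (V × V)} {H : Set (V × V)}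
    (hP : IsDisjointFamily E s t P) (hts : t ≠ s) (hPH : ∀ j, ∀ e ∈ P j, e ∈ H) :
    k ≤ {e ∈ H | e.2 = t}.ncard := by
  have hcard := hP.isFlow.card_heads hts
  calc k ≤ ((familyEdges P).filter fun e => e.2 = t).card := hcard ▸ Nat.le_add_left _ _
    _ = {e ∈ (familyEdges P : Set (V × V)) | e.2 = t}.ncard := by
        rw [← Set.ncard_coe_finset, Finset.coe_filter]
        rfl
    _ ≤ {e ∈ H | e.2 = t}.ncard := by
        refine Set.ncard_le_ncard fun e ⟨he, het⟩ => ⟨?_, het⟩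
        obtain ⟨j, hj⟩ := mem_familyEdges.1 he
        exact hPH j e hj

theorem exists_isDisjointFamily_iff_le_lambda (hts : t ≠ s) :
    (∃ P : Fin k → List (V × V), IsDisjointFamily E s t P) ↔ k ≤ lambda E s t := by
  have hbdd : BddAbove {k | ∃ P : Fin k → List (V × V), IsDisjointFamily E s t P} :=
    ⟨{e ∈ E | e.2 = t}.ncard, fun l ⟨P, hP⟩ => hP.le_ncard_heads hts fun j => (hP.1 j).2.1⟩
  refine ⟨fun h => le_csSup hbdd h, fun h => ?_⟩
  obtain ⟨P, hP⟩ := Nat.sSup_mem (s := {k | ∃ P : Fin k → List (V × V), IsDisjointFamily E s t P})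
    ⟨0, Fin.elim0, fun j => j.elim0, fun j => j.elim0⟩ hbdd
  exact hP.exists_of_le h

theorem exists_isFlow_iff_le_lambda [DecidableEq V] (hts : t ≠ s) :
    (∃ F, IsFlow id E s t k F) ↔ k ≤ lambda E s t := by
  rw [← exists_isDisjointFamily_iff_le_lambda hts]
  constructor
  · rintro ⟨F, hF⟩
    exact hF.exists_isDisjointFamily.imp fun _ hP => hP.1
  · rintro ⟨P, hP⟩
    exact ⟨_, hP.isFlow⟩

theorem exists_forall_isMinFlow [DecidableEq V] {M : Type*} [AddCommMonoid M] [LinearOrder M]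
    (E : Set (V × V)) (w : V × V → M) (s : V) (p : ℕ) :
    ∃ f : V → Finset (V × V), ∀ t ≠ s, IsMinFlow id E w s t (min p (lambda E s t)) (f t) := by
  have hex : ∀ t, ∃ F, t ≠ s → IsMinFlow id E w s t (min p (lambda E s t)) F := fun t => by
    by_cases hts : t = s
    · exact ⟨∅, fun h => absurd hts h⟩
    · obtain ⟨F, hF⟩ := (exists_isFlow_iff_le_lambda hts).2 (min_le_right p (lambda E s t))
      exact (hF.exists_isMinFlow w).imp fun _ hG _ => hG
  exact ⟨fun t => (hex t).choose, fun t => (hex t).choose_spec⟩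

end Connectivity

theorem exists_injective_nat_weight (ι : Type*) [Finite ι] :
    ∃ δ : ι → ℕ, (∀ e, 0 < δ e) ∧ Function.Injective fun F : Finset ι => ∑ e ∈ F, δ e := by
  obtain ⟨n, ⟨g⟩⟩ := Finite.exists_equiv_fin ι
  let f : ι ↪ ℕ := g.toEmbedding.trans Fin.valEmbedding
  refine ⟨fun e => 2 ^ f e, fun e => by positivity, fun F G h => ?_⟩
  apply Finset.map_injective f
  apply Finset.geomSum_injective le_rfl
  simpa only [Finset.sum_map] using h

theorem exists_injective_lex_weight {ι R : Type*} [Finite ι] [AddCommMonoid R] [PartialOrder R]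
    (c : ι → R) :
    ∃ w : ι → R ×ₗ ℕ, (∀ e, 0 ≤ c e → 0 < w e) ∧
      (Function.Injective fun F : Finset ι => ∑ e ∈ F, w e) ∧
      ∀ F G : Finset ι, ∑ e ∈ F, w e ≤ ∑ e ∈ G, w e → ∑ e ∈ F, c e ≤ ∑ e ∈ G, c e := by
  obtain ⟨δ, hδ, hinj⟩ := exists_injective_nat_weight ι
  let w : ι → R ×ₗ ℕ := fun e => toLex (c e, δ e)
  have hw : ∀ F : Finset ι, ∑ e ∈ F, w e = toLex (∑ e ∈ F, c e, ∑ e ∈ F, δ e) := fun F => by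
    rw [prod_mk_sum]
    exact (map_sum (toLexAddEquiv (R × ℕ)) _ F).symm
  refine ⟨w, fun e he => ?_, fun F G h => hinj ?_, fun F G h => ?_⟩
  · exact Prod.Lex.toLex_lt_toLex.2 (he.lt_or_eq.imp_right fun he => ⟨he, hδ e⟩)
  · simp only [hw] at h
    exact congrArg Prod.snd (toLex.injective h)
  · rw [hw, hw] at h
    exact Prod.Lex.monotone_fst_ofLex h

theorem ncard_eq_sum_ncard_fiber {α β : Type*} [Finite α] [Fintype β] (f : α → β) (K : Set α) :
    K.ncard = ∑ b, {a ∈ K | f a = b}.ncard := by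
  have := Fintype.ofFinite α
  rw [Set.ncard_eq_toFinset_card', Finset.card_eq_sum_card_fiberwise (t := Finset.univ)
    fun a _ => Finset.mem_coe.2 (Finset.mem_univ (f a))]
  refine Finset.sum_congr rfl fun b _ => ?_
  rw [← Set.ncard_coe_finset]
  congr 1
  ext a
  simp

section Preserver

variable {V : Type*} [Fintype V] [DecidableEq V] {E : Set (V × V)} {s : V} {p : ℕ}

/-- The union of the edge sets `f t` over the vertices `t ≠ s`. A preserver arises when each `f t`
is a flow from `s` to `t` of least weight, for one injective weight common to all `t`. -/
def preserver (s : V) (f : V → Finset (V × V)) : Finset (V × V) :=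
  (Finset.univ.erase s).biUnion f

theorem mem_preserver {f : V → Finset (V × V)} {e : V × V} :
    e ∈ preserver s f ↔ ∃ t ≠ s, e ∈ f t := by
  simp [preserver]

theorem preserver_subset {f : V → Finset (V × V)} (hf : ∀ t ≠ s, ↑(f t) ⊆ E) :
    ↑(preserver s f) ⊆ E := fun _ he =>
  let ⟨t, hts, het⟩ := mem_preserver.1 he
  hf t hts het

variable {M : Type*} [AddCommMonoid M] [LinearOrder M] [IsOrderedCancelAddMonoid M]
  {w : V × V → M} {f : V → Finset (V × V)}

theorem head_ne_of_mem_preserver (hw : ∀ e ∈ E, 0 < w e)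
    (hf : ∀ t ≠ s, IsMinFlow id E w s t (min p (lambda E s t)) (f t)) {e : V × V}
    (he : e ∈ preserver s f) : e.2 ≠ s :=
  let ⟨t, hts, het⟩ := mem_preserver.1 he
  ((hf t hts).head_ne_source_and_tail_ne_sink hw het).1

theorem preserver_filter_head_eq (hinj : Function.Injective fun F : Finset (V × V) => ∑ e ∈ F, w e)
    (hf : ∀ t ≠ s, IsMinFlow id E w s t (min p (lambda E s t)) (f t)) {t : V} (hts : t ≠ s) :
    ((preserver s f).filter fun e => e.2 = t) = (f t).filter fun e => e.2 = t := by
  ext e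
  simp only [Finset.mem_filter, mem_preserver]
  refine and_congr_left fun het => ⟨fun ⟨u, hus, heu⟩ => ?_, fun he => ⟨t, hts, he⟩⟩
  refine (hf u hus).mem_of_head_eq hinj (hf t hts) (fun hflow => ?_) heu het
  have := (exists_isFlow_iff_le_lambda hts).1 hflow
  omega

theorem ncard_preserver_heads (hw : ∀ e ∈ E, 0 < w e)
    (hinj : Function.Injective fun F : Finset (V × V) => ∑ e ∈ F, w e)
    (hf : ∀ t ≠ s, IsMinFlow id E w s t (min p (lambda E s t)) (f t)) {t : V} (hts : t ≠ s) :
    {e ∈ (preserver s f : Set (V × V)) | e.2 = t}.ncard = min p (lambda E s t) := by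
  have htails : ((f t).filter fun e => e.1 = t) = ∅ := Finset.filter_eq_empty_iff.2 fun _ he =>
    ((hf t hts).head_ne_source_and_tail_ne_sink hw he).2
  calc {e ∈ (preserver s f : Set (V × V)) | e.2 = t}.ncard
      = ((f t).filter fun e => e.2 = t).card := by
        rw [← preserver_filter_head_eq hinj hf hts, ← Set.ncard_coe_finset, Finset.coe_filter]
        rfl
    _ = ((f t).filter fun e => e.1 = t).card + min p (lambda E s t) := (hf t hts).card_heads hts
    _ = min p (lambda E s t) := by rw [htails, Finset.card_empty, zero_add]

theorem ncard_eq_sum_ncard_heads {H : Set (V × V)} (hs : ∀ e ∈ H, e.2 ≠ s) :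
    H.ncard = ∑ t ∈ Finset.univ.erase s, {e ∈ H | e.2 = t}.ncard := by
  have hempty : {e ∈ H | e.2 = s} = ∅ := Set.eq_empty_of_forall_notMem fun e he => hs e he.1 he.2
  rw [ncard_eq_sum_ncard_fiber Prod.snd H]
  exact (Finset.sum_erase _ (by rw [hempty, Set.ncard_empty])).symm

theorem sum_le_ncard_of_forall_exists_isDisjointFamily {H : Set (V × V)} {k : V → ℕ}
    (hH : ∀ t ≠ s, ∃ P : Fin (k t) → List (V × V),
      IsDisjointFamily E s t P ∧ ∀ j, ∀ e ∈ P j, e ∈ H) :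
    ∑ t ∈ Finset.univ.erase s, k t ≤ H.ncard :=
  calc ∑ t ∈ Finset.univ.erase s, k t
      ≤ ∑ t ∈ Finset.univ.erase s, {e ∈ H | e.2 = t}.ncard := Finset.sum_le_sum fun t ht => by
        have hts := Finset.ne_of_mem_erase ht
        obtain ⟨P, hP, hPH⟩ := hH t hts
        exact hP.le_ncard_heads hts hPH
    _ ≤ ∑ t, {e ∈ H | e.2 = t}.ncard := Finset.sum_le_sum_of_subset (Finset.erase_subset _ _)
    _ = H.ncard := (ncard_eq_sum_ncard_fiber Prod.snd H).symm

end Preserver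

theorem exists_optimal_preserver_general_general [Fintype V] [DecidableEq V]
    (E : Set (V × V)) (c : V × V → ℝ) (s : V) (hc : ∀ e ∈ E, 0 ≤ c e) (p : ℕ) :
    ∃ H ⊆ E,
      (∀ e ∈ H, e.2 ≠ s) ∧
      (∀ t, t ≠ s → {e ∈ H | e.2 = t}.ncard = min p (lambda E s t)) ∧
      H.ncard = ∑ t ∈ Finset.univ.erase s, min p (lambda E s t) ∧
      (∀ t, t ≠ s → ∃ P : Fin (min p (lambda E s t)) → List (V × V),
        IsMinFamily E c s t P ∧ ∀ j, ∀ e ∈ P j, e ∈ H) ∧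
      ∀ H' : Set (V × V),
        (∀ t, t ≠ s → ∃ P : Fin (min p (lambda E s t)) → List (V × V),
          IsDisjointFamily E s t P ∧ ∀ j, ∀ e ∈ P j, e ∈ H') →
        (∑ t ∈ Finset.univ.erase s, min p (lambda E s t)) ≤ H'.ncard := by
  obtain ⟨w, hw, hinj, hwc⟩ := exists_injective_lex_weight c
  have hwpos : ∀ e ∈ E, 0 < w e := fun e he => hw e (hc e he)
  obtain ⟨f, hf⟩ := exists_forall_isMinFlow E w s p
  have hs : ∀ e ∈ preserver s f, e.2 ≠ s := fun e => head_ne_of_mem_preserver hwpos hf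
  have hheads := fun t => ncard_preserver_heads (t := t) hwpos hinj hf
  refine ⟨preserver s f, preserver_subset fun t hts => (hf t hts).subset, hs, hheads, ?_,
    fun t hts => ?_, fun _ => sum_le_ncard_of_forall_exists_isDisjointFamily⟩
  · rw [ncard_eq_sum_ncard_heads hs]
    exact Finset.sum_congr rfl fun t ht => hheads t (Finset.ne_of_mem_erase ht)
  · have hmin : IsMinFlow id E c s t (min p (lambda E s t)) (f t) :=
      ⟨(hf t hts).toIsFlow, fun G hG => hwc _ _ ((hf t hts).sum_le G hG)⟩
    obtain ⟨P, hP, hPf⟩ := hmin.exists_isMinFamily hc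
    exact ⟨P, hP, fun j e he => mem_preserver.2 ⟨t, hts, hPf (mem_familyEdges.2 ⟨j, he⟩)⟩⟩

/-- Without the outconnectivity assumption: with
`σ(t) = min p (λ(t))`, there is `H ⊆ E` with no edge entering `s`, exactly
`σ(t)` edges entering each `t ≠ s` (so `|H| = Σ_{t ≠ s} σ(t)`), containing a
minimum-total-cost family of `σ(t)` edge-disjoint paths from `s` to `t` for
every `t ≠ s` with `σ(t) ≥ 1`; moreover, every `H' ⊆ E` containing `σ(t)`
edge-disjoint paths from `s` to `t` for each `t ≠ s` has
`|H'| ≥ Σ_{t ≠ s} σ(t)`. -/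
theorem exists_optimal_preserver_general [Fintype V] [DecidableEq V]
    (E : Set (V × V)) (c : V × V → ℝ) (s : V)
    (hirr : ∀ e ∈ E, e.1 ≠ e.2)
    (hanti : ∀ e ∈ E, (e.2, e.1) ∉ E)
    (hc : ∀ e ∈ E, 0 ≤ c e)
    (p : ℕ) (hp : 1 ≤ p) :
    ∃ H ⊆ E,
      (∀ e ∈ H, e.2 ≠ s) ∧
      (∀ t, t ≠ s → {e ∈ H | e.2 = t}.ncard = min p (lambda E s t)) ∧
      H.ncard = ∑ t ∈ Finset.univ.erase s, min p (lambda E s t) ∧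
      (∀ t, t ≠ s → 1 ≤ min p (lambda E s t) →
        ∃ P : Fin (min p (lambda E s t)) → List (V × V),
          IsMinFamily E c s t P ∧ ∀ j, ∀ e ∈ P j, e ∈ H) ∧
      ∀ H' ⊆ E,
        (∀ t, t ≠ s → ∃ P : Fin (min p (lambda E s t)) → List (V × V),
          IsDisjointFamily E s t P ∧ ∀ j, ∀ e ∈ P j, e ∈ H') →
        (∑ t ∈ Finset.univ.erase s, min p (lambda E s t)) ≤ H'.ncard := by
  obtain ⟨H, hHE, hs, hheads, hcard, hmin, hopt⟩ :=
    exists_optimal_preserver_general_general E c s hc p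
  exact ⟨H, hHE, hs, hheads, hcard, fun t hts _ => hmin t hts, fun H' _ => hopt H'⟩

end MultipathPreserver
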